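/- Let U be a consistent, effectively ef-essentially incomplete c.e. theory. Then there is a c.e. set 𝒳 of sentences such that U is effectively ef-essentially 𝒳-incomplete but U is not effectively if-essentially 𝒳-incomplete. -/

import Mathlib

open FirstOrder FirstOrder.Language

namespace PourEl

/-! ## Recursion-theoretic notions -/

/-- The `i`-th computably enumerable subset of `ℕ` (the domain of the `i`-th
partial computable function). -/
def WSet (i : ℕ) : Set ℕ :=
  {n | ((Denumerable.ofNat Nat.Partrec.Code i).eval n).Dom}

/-- A set of natural numbers is computably enumerable. -/
def CE (A : Set ℕ) : Prop := ∃ i, A = WSet i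

/-- A set of natural numbers is computable. -/
def Comp (A : Set ℕ) : Prop := ComputablePred (· ∈ A)

/-- Disjoint sets `X`, `Y` are computably separable iff some computable set
contains `X` and is disjoint from `Y`. -/
def CompSeparable (X Y : Set ℕ) : Prop :=
  ∃ Z : Set ℕ, Comp Z ∧ X ⊆ Z ∧ Y ∩ Z = ∅

/-- Computable inseparability. -/
def CompInseparable (X Y : Set ℕ) : Prop := ¬ CompSeparable X Y

/-- `Z` and `W` weakly biseparate `X` and `Y`. -/
def WeaklyBiseparate {α : Type*} (Z W X Y : Set α) : Prop :=
  X ⊆ Z ∧ Y ⊆ W ∧ Z ∩ Y = ∅ ∧ W ∩ X = ∅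

/-- `Z` and `W` biseparate `X` and `Y`. -/
def Biseparate {α : Type*} (Z W X Y : Set α) : Prop :=
  WeaklyBiseparate Z W X Y ∧ Z ∩ W = ∅

/-! ## Logical notions -/

variable {L : FirstOrder.Language}

/-- Provability: `φ` is a first-order consequence of `U` (by Gödel completeness,
semantic consequence). -/
def Prv (U : L.Theory) (φ : L.Sentence) : Prop := U ⊨ᵇ φ

/-- `U_p`: the set of theorems of `U`. -/
def Thms (U : L.Theory) : Set L.Sentence := {φ | Prv U φ}

/-- `U_r`: the set of refutable sentences of `U`. -/
def Refut (U : L.Theory) : Set L.Sentence := {φ | Prv U ∼φ}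

/-- Consistency: `U ⊬ ⊥`. -/
def Consistent (U : L.Theory) : Prop := ¬ Prv U ⊥

/-- `φ` is independent of `U`: `U` proves neither `φ` nor `¬φ`. -/
def Independent (U : L.Theory) (φ : L.Sentence) : Prop := ¬ Prv U φ ∧ ¬ Prv U ∼φ

/-- `U` is incomplete: some sentence is independent of it. -/
def Incomplete (U : L.Theory) : Prop := ∃ φ, Independent U φ

/-- Mono-consequence: `U ⊢_m φ` iff `ψ ⊢ φ` for some `ψ ∈ U`. -/
def MPrv (U : L.Theory) (φ : L.Sentence) : Prop := ∃ ψ ∈ U, Prv {ψ} φ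

/-- `U_m`: the set of mono-theorems of `U`. -/
def MThms (U : L.Theory) : Set L.Sentence := {φ | MPrv U φ}

/-- `U_n`: the set of mono-refutable sentences of `U`. -/
def MRefut (U : L.Theory) : Set L.Sentence := {φ | MPrv U ∼φ}

/-- Mono-consistency: every member is consistent by itself. -/
def MonoConsistent (U : L.Theory) : Prop := ∀ ψ ∈ U, Consistent ({ψ} : L.Theory)

/-- `Û`: the set of all non-empty finite conjunctions of elements of `U`. -/
def hat (U : L.Theory) : L.Theory :=
  {φ | ∃ (ψ : L.Sentence) (l : List L.Sentence),
    ψ ∈ U ∧ (∀ χ ∈ l, χ ∈ U) ∧ φ = l.foldl (· ⊓ ·) ψ}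

/-- `U ⋓ V`. -/
def Cup (U V : L.Theory) : L.Theory :=
  {χ | ∃ φ ∈ U, ∃ ψ ∈ V, χ = φ ⊓ ψ}

/-- `U ⋐ V`: for every `φ ∈ U` and `ψ ∈ V` there is `ρ ∈ V` with `ρ ⊢ φ ∧ ψ`. -/
def Ssub (U V : L.Theory) : Prop :=
  ∀ φ ∈ U, ∀ ψ ∈ V, ∃ ρ ∈ V, Prv {ρ} (φ ⊓ ψ)

/-! ## Gödel numbering -/

/-- A Gödel numbering of the sentences of a (countable) signature: a bijective
coding of sentences by natural numbers that is effective for the basic syntactic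
operations, and for which the theorems of a c.e. theory can be effectively
enumerated from an index of the theory. -/
structure Numbering (L : FirstOrder.Language) where
  equiv : L.Sentence ≃ ℕ
  neg_comp : Computable fun n => equiv ∼(equiv.symm n)
  inf_comp : Computable₂ fun m n => equiv (equiv.symm m ⊓ equiv.symm n)
  imp_comp : Computable₂ fun m n => equiv (equiv.symm m ⟹ equiv.symm n)
  iff_comp : Computable₂ fun m n => equiv (equiv.symm m ⇔ equiv.symm n)
  thmIdx : ℕ → ℕ
  thmIdx_comp : Computable thmIdx
  thmIdx_spec : ∀ i, WSet (thmIdx i) = equiv '' Thms (equiv.symm '' WSet i)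

namespace Numbering

variable (g : Numbering L)

/-- The code of a sentence. -/
def code (φ : L.Sentence) : ℕ := g.equiv φ

/-- The set of codes of a set of sentences. -/
def codes (S : Set L.Sentence) : Set ℕ := g.equiv '' S

/-- The theory axiomatised by the `i`-th c.e. set (identified with a set of
sentences via the numbering). -/
def thy (i : ℕ) : L.Theory := g.equiv.symm '' WSet i

/-- The theory `U` is computably enumerable (with respect to the numbering). -/
def CEThy (U : L.Theory) : Prop := CE (g.codes U)

end Numbering


/-- `Φ` witnesses that `U` is effectively if-essentially `F`-incomplete: whenever
`W i` is a consistent finite extension of `U` (as a set of axioms), `Φ i`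
converges to (the code of) a sentence in `F (W i)` independent of `W i`. -/
def IfEssWitness (g : Numbering L) (U : L.Theory)
    (F : Set L.Sentence → Set L.Sentence) (Φ : ℕ →. ℕ) : Prop :=
  ∀ i, (∃ Γ : Finset L.Sentence, g.thy i = U ∪ (Γ : Set L.Sentence)) →
    Consistent (g.thy i) →
    ∃ n ∈ Φ i, ∃ φ : L.Sentence, g.code φ = n ∧ φ ∈ F (g.thy i) ∧ Independent (g.thy i) φ

/-- `U` is effectively if-essentially `F`-incomplete. -/
def EffIfEssIncomplete (g : Numbering L) (U : L.Theory)
    (F : Set L.Sentence → Set L.Sentence) : Prop :=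
  ∃ Φ : ℕ →. ℕ, Partrec Φ ∧ IfEssWitness g U F Φ

/-- `U` is effectively ef-essentially `F`-incomplete: a total computable function
on (codes of) sentences produces, for each `φ` consistent with `U`, a sentence
independent of `U ∪ {φ}` lying in `F (U ∪ {φ})`. -/
def EffEfEssIncomplete (g : Numbering L) (U : L.Theory)
    (F : Set L.Sentence → Set L.Sentence) : Prop :=
  ∃ Φ : ℕ → ℕ, Computable Φ ∧ ∀ φ : L.Sentence,
    Consistent (U ∪ {φ}) →
    Independent (U ∪ {φ}) (g.equiv.symm (Φ (g.code φ))) ∧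
    g.equiv.symm (Φ (g.code φ)) ∈ F (U ∪ {φ})

universe u v

theorem prv_iff {L : FirstOrder.Language.{u, v}} (U : L.Theory) (φ : L.Sentence) :
    Prv U φ ↔ ∀ M : Theory.ModelType.{u, v, max u v} U, M ⊨ φ :=
  Theory.models_sentence_iff

theorem prv_insert {L : FirstOrder.Language.{u, v}} (U : L.Theory) (φ ψ : L.Sentence) :
    Prv (U ∪ {φ}) ψ ↔ Prv U (φ ⟹ ψ) := by
  rw [prv_iff, prv_iff]
  constructor
  · intro h M
    rw [Sentence.realize_imp]
    intro hφ
    have : M ⊨ U ∪ {φ} := by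
      rw [Theory.model_union_iff, Theory.model_singleton_iff]
      exact ⟨inferInstance, hφ⟩
    exact h (Theory.ModelType.of (U ∪ {φ}) M)
  · intro h M
    have hM : M ⊨ U ∪ {φ} := M.is_model
    rw [Theory.model_union_iff, Theory.model_singleton_iff] at hM
    have := hM.1
    have := h (Theory.ModelType.of U M)
    exact (Sentence.realize_imp (M := M)).1 this hM.2

theorem independent_imp {L : FirstOrder.Language.{u, v}} (U : L.Theory) (φ ψ : L.Sentence)
    (h : Independent (U ∪ {φ}) ψ) : Independent (U ∪ {φ}) (φ ⟹ ψ) := by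
  refine ⟨fun h1 => h.1 ?_, fun h1 => h.2 ?_⟩
  all_goals
    rw [prv_insert, prv_iff] at h1 ⊢
    intro M
    have := h1 M
    simp only [Sentence.realize_imp, Sentence.realize_not] at this ⊢
    tauto

theorem consistent_imp {L : FirstOrder.Language.{u, v}} (U : L.Theory) (hU : Consistent U)
    (φ ψ : L.Sentence) (h : Consistent (U ∪ {φ}) → Independent (U ∪ {φ}) ψ) :
    Consistent (U ∪ {φ ⟹ ψ}) := by
  intro hc
  rw [prv_insert, prv_iff] at hc
  have hφ : ∀ M : Theory.ModelType.{u, v, max u v} U, M ⊨ φ ∧ ¬ M ⊨ ψ := by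
    intro M
    have := hc M
    rw [Sentence.realize_imp, Sentence.realize_imp] at this
    have hb : ¬ (M ⊨ (⊥ : L.Sentence)) := fun h => h
    tauto
  have hcon : Consistent (U ∪ {φ}) := by
    intro hb
    apply hU
    rw [prv_insert, prv_iff] at hb
    rw [prv_iff]
    intro M
    exact (Sentence.realize_imp (M := M)).1 (hb M) (hφ M).1
  apply (h hcon).2
  rw [prv_insert, prv_iff]
  intro M
  rw [Sentence.realize_imp, Sentence.realize_not]
  exact fun _ => (hφ M).2

theorem ce_of_partrec {f : ℕ →. ℕ} (hf : Partrec f) : CE {n | (f n).Dom} := by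
  obtain ⟨c, hc⟩ := Nat.Partrec.Code.exists_code.1 (Partrec.nat_iff.1 hf)
  refine ⟨Encodable.encode c, ?_⟩
  simp [WSet, hc]

theorem ce_range {f : ℕ → ℕ} (hf : Computable f) : CE (Set.range f) := by
  have h : Partrec fun n : ℕ => Nat.rfind fun k => Part.some (decide (f k = n)) := by
    apply Partrec.rfind
    have : Computable₂ fun n k : ℕ => decide (f k = n) :=
      (Primrec.eq (α := ℕ)).decide.to_comp.comp (hf.comp Computable.snd) Computable.fst
    exact this.partrec₂
  convert ce_of_partrec h using 1
  ext n
  refine Iff.trans ?_ (Nat.rfind_dom (p := fun k => Part.some (decide (f k = n)))).symm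
  simp

/-- The recursion theorem for the sets `A ∪ (B ∩ Φ(i))`. -/
theorem exists_fixed (A B : Set ℕ) (hA : CE A) (hB : CE B) (Φ : ℕ →. ℕ) (hΦ : Partrec Φ) :
    ∃ i, ∀ n, n ∈ WSet i ↔ n ∈ A ∨ (n ∈ B ∧ n ∈ Φ i) := by
  obtain ⟨a, rfl⟩ := hA
  obtain ⟨b, rfl⟩ := hB
  have hev : ∀ i : ℕ, Partrec (Denumerable.ofNat Nat.Partrec.Code i).eval := fun i =>
    Partrec.nat_iff.2 (Nat.Partrec.Code.exists_code.2 ⟨_, rfl⟩)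
  have h1 : Partrec fun p : Nat.Partrec.Code × ℕ =>
      (Denumerable.ofNat Nat.Partrec.Code a).eval p.2 := (hev a).comp Computable.snd
  have h2 : Partrec fun p : Nat.Partrec.Code × ℕ =>
      (Φ (Encodable.encode p.1)).bind fun m =>
        bif decide (m = p.2) then (Denumerable.ofNat Nat.Partrec.Code b).eval p.2
        else Part.none := by
    refine Partrec.bind (hΦ.comp (Computable.encode.comp Computable.fst)) ?_
    refine Partrec.cond ?_ ((hev b).comp (Computable.snd.comp Computable.fst)) Partrec.none
    exact (Primrec.eq (α := ℕ)).decide.to_comp.comp Computable.snd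
      (Computable.snd.comp Computable.fst)
  obtain ⟨k, hk, hk'⟩ := Partrec.merge' h1 h2
  obtain ⟨c, hc⟩ := Nat.Partrec.Code.fixed_point₂ (f := fun c n => k (c, n)) hk
  refine ⟨Encodable.encode c, fun n => ?_⟩
  have : n ∈ WSet (Encodable.encode c) ↔ (k (c, n)).Dom := by
    simp [WSet, hc]
  rw [this, (hk' (c, n)).2]
  refine or_congr Iff.rfl ?_
  constructor
  · intro hd
    obtain ⟨y, hy⟩ := Part.dom_iff_mem.1 hd
    obtain ⟨m, hm, hy⟩ := Part.mem_bind_iff.1 hy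
    by_cases hmn : m = n
    · subst hmn
      simp only [decide_true, cond_true] at hy
      exact ⟨Part.dom_iff_mem.2 ⟨y, hy⟩, hm⟩
    · simp [hmn] at hy
  · rintro ⟨hb, hm⟩
    obtain ⟨y, hy⟩ := Part.dom_iff_mem.1 hb
    refine Part.dom_iff_mem.2 ⟨y, Part.mem_bind_iff.2 ⟨n, hm, ?_⟩⟩
    simpa using hy

/-- If `U` is a consistent, effectively ef-essentially
incomplete c.e. theory, then there is a c.e. set `X` of sentences such that `U`
is effectively ef-essentially `X`-incomplete but not effectively if-essentially
`X`-incomplete. -/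
theorem statement15 {L : FirstOrder.Language} (g : Numbering L) (U : L.Theory)
    (hU : g.CEThy U) (hcon : Consistent U)
    (h : EffEfEssIncomplete g U (fun _ => (Set.univ : Set L.Sentence))) :
    ∃ X : Set L.Sentence, CE (g.codes X) ∧
      EffEfEssIncomplete g U (fun _ => X) ∧
      ¬ EffIfEssIncomplete g U (fun _ => X) := by
  obtain ⟨Φ, hΦ, hind⟩ := h
  let ψ : L.Sentence → L.Sentence := fun φ => φ ⟹ g.equiv.symm (Φ (g.code φ))
  have hcodes : g.codes (Set.range ψ) =
      Set.range fun n => g.equiv (g.equiv.symm n ⟹ g.equiv.symm (Φ n)) := by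
    ext n
    constructor
    · rintro ⟨_, ⟨φ, rfl⟩, rfl⟩
      exact ⟨g.equiv φ, by simp [ψ, Numbering.code]⟩
    · rintro ⟨m, rfl⟩
      exact ⟨_, ⟨g.equiv.symm m, rfl⟩, by simp [ψ, Numbering.code]⟩
  have hcomp : Computable fun n => g.equiv (g.equiv.symm n ⟹ g.equiv.symm (Φ n)) :=
    g.imp_comp.comp Computable.id hΦ
  have hce : CE (g.codes (Set.range ψ)) := hcodes ▸ ce_range hcomp
  refine ⟨Set.range ψ, hce, ⟨_, hcomp, fun φ hφ => ?_⟩, ?_⟩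
  · have := independent_imp U φ _ (hind φ hφ).1
    simp only [Numbering.code, Equiv.symm_apply_apply] at this ⊢
    exact ⟨this, ⟨φ, rfl⟩⟩
  · rintro ⟨Θ, hΘ, hw⟩
    obtain ⟨i, hi⟩ := exists_fixed _ _ hU hce Θ hΘ
    have hthy : ∀ χ, χ ∈ g.thy i ↔ χ ∈ U ∨ (χ ∈ Set.range ψ ∧ g.equiv χ ∈ Θ i) := by
      intro χ
      have h1 : χ ∈ g.thy i ↔ g.equiv χ ∈ WSet i := by
        simp [Numbering.thy, Equiv.symm_apply_eq]
      rw [h1, hi]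
      simp [Numbering.codes]
    by_cases hx : ∃ χ ∈ Set.range ψ, g.equiv χ ∈ Θ i
    · obtain ⟨χ, hχ, hχΘ⟩ := hx
      have heq : g.thy i = U ∪ {χ} := by
        ext ξ
        rw [hthy]
        refine or_congr Iff.rfl ⟨fun h => ?_, fun h => ?_⟩
        · exact g.equiv.injective (Part.mem_unique h.2 hχΘ)
        · rw [Set.mem_singleton_iff.1 h]
          exact ⟨hχ, hχΘ⟩
      have hcons : Consistent (g.thy i) := by
        rw [heq]
        obtain ⟨φ, rfl⟩ := hχ
        exact consistent_imp U hcon _ _ fun h => (hind φ h).1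
      obtain ⟨n, hn, ξ, rfl, _, hξ⟩ := hw i ⟨{χ}, by simpa using heq⟩ hcons
      have : ξ = χ := g.equiv.injective (Part.mem_unique hn hχΘ)
      subst this
      apply hξ.1
      rw [heq]
      exact Theory.models_sentence_of_mem (Or.inr rfl)
    · have heq : g.thy i = U := by
        ext ξ
        rw [hthy]
        exact ⟨fun h => h.resolve_right fun h => hx ⟨ξ, h.1, h.2⟩, Or.inl⟩
      obtain ⟨n, hn, ξ, rfl, hξ, _⟩ := hw i ⟨∅, by simpa using heq⟩ (by rwa [heq])
      exact hx ⟨ξ, hξ, hn⟩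

end PourEl
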